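/- arXiv:math/0602607 — 5 statements merged into one kernel-verified Lean document; each statement's English description precedes it below -/
import Mathlib

section
/- Let A = (A_1,A_2,A_3,A_4) be a connection on ℝ⁴ (smooth anti-Hermitian matrix-valued maps). Then the anti-self-dual Yang–Mills equations with respect to the Euclidean metric, namely F_{12} = −F_{34}, F_{13} = −F_{42}, F_{14} = −F_{23} everywhere on ℝ⁴, hold if and only if for every μ ∈ ℂ∖{0} the operators ∇_w̄ + μ∇_z and ∇_w − μ⁻¹∇_z̄ commute, i.e. (∇_w̄ + μ∇_z)((∇_w − μ⁻¹∇_z̄)E) = (∇_w − μ⁻¹∇_z̄)((∇_w̄ + μ∇_z)E) for every smooth map E : ℝ⁴ → M_n(ℂ). -/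
open Matrix Complex
open scoped Matrix ComplexConjugate

attribute [local instance] Matrix.normedAddCommGroup Matrix.normedSpace

noncomputable section

/-- `n × n` complex matrices. -/
abbrev Mat (n : ℕ) := Matrix (Fin n) (Fin n) ℂ

/-- `ℝ⁴` with coordinates `(x₁, x₂, x₃, x₄)`. -/
abbrev P4 : Type := ℝ × ℝ × ℝ × ℝ

/-- Partial derivative in `x₁`. -/
def pd1 {n : ℕ} (f : P4 → Mat n) (p : P4) : Mat n :=
  deriv (fun s => f (s, p.2.1, p.2.2.1, p.2.2.2)) p.1

/-- Partial derivative in `x₂`. -/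
def pd2 {n : ℕ} (f : P4 → Mat n) (p : P4) : Mat n :=
  deriv (fun s => f (p.1, s, p.2.2.1, p.2.2.2)) p.2.1

/-- Partial derivative in `x₃`. -/
def pd3 {n : ℕ} (f : P4 → Mat n) (p : P4) : Mat n :=
  deriv (fun s => f (p.1, p.2.1, s, p.2.2.2)) p.2.2.1

/-- Partial derivative in `x₄`. -/
def pd4 {n : ℕ} (f : P4 → Mat n) (p : P4) : Mat n :=
  deriv (fun s => f (p.1, p.2.1, p.2.2.1, s)) p.2.2.2

/-- Covariant derivative `∇E = ∂E − A·E` in the direction corresponding to `pd`. -/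
def nab {n : ℕ} (pd : (P4 → Mat n) → P4 → Mat n) (A : P4 → Mat n)
    (E : P4 → Mat n) (p : P4) : Mat n :=
  pd E p - A p * E p

/-- Curvature component `F_{ij} = −∂_{x_i}A_j + ∂_{x_j}A_i + [A_i, A_j]`. -/
def curv {n : ℕ} (pdi pdj : (P4 → Mat n) → P4 → Mat n) (Ai Aj : P4 → Mat n)
    (p : P4) : Mat n :=
  -(pdi Aj p) + pdj Ai p + (Ai p * Aj p - Aj p * Ai p)

/-- `∇_z = ½(∇₁ − i∇₂)`. -/
def nabz {n : ℕ} (A1 A2 E : P4 → Mat n) (p : P4) : Mat n :=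
  (2⁻¹ : ℂ) • (nab pd1 A1 E p - Complex.I • nab pd2 A2 E p)

/-- `∇_z̄ = ½(∇₁ + i∇₂)`. -/
def nabzbar {n : ℕ} (A1 A2 E : P4 → Mat n) (p : P4) : Mat n :=
  (2⁻¹ : ℂ) • (nab pd1 A1 E p + Complex.I • nab pd2 A2 E p)

/-- `∇_w = ½(∇₃ − i∇₄)`. -/
def nabw {n : ℕ} (A3 A4 E : P4 → Mat n) (p : P4) : Mat n :=
  (2⁻¹ : ℂ) • (nab pd3 A3 E p - Complex.I • nab pd4 A4 E p)

/-- `∇_w̄ = ½(∇₃ + i∇₄)`. -/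
def nabwbar {n : ℕ} (A3 A4 E : P4 → Mat n) (p : P4) : Mat n :=
  (2⁻¹ : ℂ) • (nab pd3 A3 E p + Complex.I • nab pd4 A4 E p)

/-- The operator `∇_w̄ + μ∇_z`. -/
def DOne {n : ℕ} (A1 A2 A3 A4 : P4 → Mat n) (μ : ℂ) (E : P4 → Mat n) : P4 → Mat n :=
  fun p => nabwbar A3 A4 E p + μ • nabz A1 A2 E p

/-- The operator `∇_w − μ⁻¹∇_z̄` (Euclidean signature). -/
def DTwoEucl {n : ℕ} (A1 A2 A3 A4 : P4 → Mat n) (μ : ℂ) (E : P4 → Mat n) : P4 → Mat n :=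
  fun p => nabw A3 A4 E p - μ⁻¹ • nabzbar A1 A2 E p

def IsPd {n : ℕ} (pd : (P4 → Mat n) → P4 → Mat n) (v : P4) : Prop :=
  ∀ f : P4 → Mat n, ContDiff ℝ (⊤ : ℕ∞) f → ∀ p, pd f p = fderiv ℝ f p v

lemma isPd_aux {n : ℕ} (f : P4 → Mat n) (hf : ContDiff ℝ (⊤ : ℕ∞) f) (c : ℝ → P4) (v : P4)
    (t : ℝ) (hc : HasDerivAt c v t) : deriv (fun s => f (c s)) t = fderiv ℝ f (c t) v :=
  (((hf.differentiable (by simp)) (c t)).hasFDerivAt.comp_hasDerivAt t hc).deriv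

lemma isPd1 {n : ℕ} : IsPd (n := n) pd1 (1, 0, 0, 0) := fun f hf p =>
  isPd_aux f hf (fun s => (s, p.2.1, p.2.2.1, p.2.2.2)) _ p.1
    ((hasDerivAt_id _).prodMk (hasDerivAt_const _ _))

lemma isPd2 {n : ℕ} : IsPd (n := n) pd2 (0, 1, 0, 0) := fun f hf p =>
  isPd_aux f hf (fun s => (p.1, s, p.2.2.1, p.2.2.2)) _ p.2.1
    ((hasDerivAt_const _ _).prodMk ((hasDerivAt_id _).prodMk (hasDerivAt_const _ _)))

lemma isPd3 {n : ℕ} : IsPd (n := n) pd3 (0, 0, 1, 0) := fun f hf p =>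
  isPd_aux f hf (fun s => (p.1, p.2.1, s, p.2.2.2)) _ p.2.2.1
    ((hasDerivAt_const _ _).prodMk ((hasDerivAt_const _ _).prodMk
      ((hasDerivAt_id _).prodMk (hasDerivAt_const _ _))))

lemma isPd4 {n : ℕ} : IsPd (n := n) pd4 (0, 0, 0, 1) := fun f hf p =>
  isPd_aux f hf (fun s => (p.1, p.2.1, p.2.2.1, s)) _ p.2.2.2
    ((hasDerivAt_const _ _).prodMk ((hasDerivAt_const _ _).prodMk
      ((hasDerivAt_const _ _).prodMk (hasDerivAt_id _))))

/-- matrix multiplication as a continuous bilinear map -/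
def mulB (n : ℕ) : Mat n →L[ℝ] Mat n →L[ℝ] Mat n :=
  LinearMap.toContinuousLinearMap
    ((LinearMap.toContinuousLinearMap (𝕜 := ℝ) (E := Mat n) (F' := Mat n)).toLinearMap ∘ₗ
      (LinearMap.mul ℝ (Mat n)))

lemma mulB_apply {n : ℕ} (a b : Mat n) : mulB n a b = a * b := rfl

lemma smooth_bilin {V : Type*} [NormedAddCommGroup V] [NormedSpace ℝ V] (B : V →L[ℝ] V →L[ℝ] V)
    {f g : P4 → V} (hf : ContDiff ℝ (⊤ : ℕ∞) f) (hg : ContDiff ℝ (⊤ : ℕ∞) g) :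
    ContDiff ℝ (⊤ : ℕ∞) (fun p => B (f p) (g p)) :=
  (B.contDiff.comp hf).clm_apply hg

lemma fderiv_app {V : Type*} [NormedAddCommGroup V] [NormedSpace ℝ V] {f : P4 → V} {p : P4}
    (hd : DifferentiableAt ℝ (fderiv ℝ f) p) (u w : P4) :
    fderiv ℝ (fun p => fderiv ℝ f p u) p w = fderiv ℝ (fderiv ℝ f) p w u := by
  rw [fderiv_clm_apply hd (differentiableAt_const _)]
  simp

lemma smooth_mul {n : ℕ} {f g : P4 → Mat n} (hf : ContDiff ℝ (⊤ : ℕ∞) f)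
    (hg : ContDiff ℝ (⊤ : ℕ∞) g) : ContDiff ℝ (⊤ : ℕ∞) (fun p => f p * g p) := by
  exact smooth_bilin (V := Mat n) (mulB n) hf hg

section
variable {n : ℕ} {pd pd' : (P4 → Mat n) → P4 → Mat n} {v v' : P4}

lemma IsPd.mul (h : IsPd pd v) {f g : P4 → Mat n} (hf : ContDiff ℝ (⊤ : ℕ∞) f)
    (hg : ContDiff ℝ (⊤ : ℕ∞) g) (p : P4) :
    pd (fun p => f p * g p) p = f p * pd g p + pd f p * g p := by
  have hf' := hf.differentiable (by simp) p
  have hg' := hg.differentiable (by simp) p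
  rw [h _ (smooth_mul hf hg), h _ hf, h _ hg]
  have := ((mulB n).hasFDerivAt_of_bilinear hf'.hasFDerivAt hg'.hasFDerivAt).fderiv
  have h2 := congrArg (fun L => L v) this
  exact h2

lemma IsPd.sub (h : IsPd pd v) {f g : P4 → Mat n} (hf : ContDiff ℝ (⊤ : ℕ∞) f)
    (hg : ContDiff ℝ (⊤ : ℕ∞) g) (p : P4) :
    pd (fun p => f p - g p) p = pd f p - pd g p := by
  rw [h _ (hf.sub hg), h _ hf, h _ hg]
  exact congrArg (fun L => L v) (fderiv_fun_sub (hf.differentiable (by simp) p)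
    (hg.differentiable (by simp) p))

lemma IsPd.add (h : IsPd pd v) {f g : P4 → Mat n} (hf : ContDiff ℝ (⊤ : ℕ∞) f)
    (hg : ContDiff ℝ (⊤ : ℕ∞) g) (p : P4) :
    pd (fun p => f p + g p) p = pd f p + pd g p := by
  rw [h _ (hf.add hg), h _ hf, h _ hg]
  exact congrArg (fun L => L v) (fderiv_fun_add (hf.differentiable (by simp) p)
    (hg.differentiable (by simp) p))

lemma IsPd.smul (h : IsPd pd v) {f : P4 → Mat n} (c : ℂ) (hf : ContDiff ℝ (⊤ : ℕ∞) f)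
    (p : P4) : pd (fun p => c • f p) p = c • pd f p := by
  rw [h _ (hf.const_smul c), h _ hf]
  exact congrArg (fun L => L v) (fderiv_fun_const_smul (hf.differentiable (by simp) p) c)

lemma IsPd.smooth (h : IsPd pd v) {f : P4 → Mat n} (hf : ContDiff ℝ (⊤ : ℕ∞) f) :
    ContDiff ℝ (⊤ : ℕ∞) (pd f) := by
  rw [show pd f = fun p => fderiv ℝ f p v from funext (h f hf)]
  exact (hf.fderiv_right (m := (⊤ : ℕ∞)) (by simp)).clm_apply contDiff_const

lemma IsPd.comm (h : IsPd pd v) (h' : IsPd pd' v') {f : P4 → Mat n}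
    (hf : ContDiff ℝ (⊤ : ℕ∞) f) (p : P4) : pd (pd' f) p = pd' (pd f) p := by
  rw [h _ (h'.smooth hf), h' _ (h.smooth hf), show pd f = fun p => fderiv ℝ f p v from
    funext (h f hf), show pd' f = fun p => fderiv ℝ f p v' from funext (h' f hf)]
  have hd : DifferentiableAt ℝ (fderiv ℝ f) p :=
    (hf.fderiv_right (m := (⊤ : ℕ∞)) (by simp)).differentiable (by simp) p
  have hs := (hf.contDiffAt (x := p)).isSymmSndFDerivAt (by
    simp only [minSmoothness_of_isRCLikeNormedField]
    exact WithTop.coe_le_coe.mpr le_top)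
  have key := hs v v'
  exact (fderiv_app hd v' v).trans (key.trans (fderiv_app hd v v').symm)

lemma IsPd.nab_smooth (h : IsPd pd v) {A f : P4 → Mat n} (hA : ContDiff ℝ (⊤ : ℕ∞) A)
    (hf : ContDiff ℝ (⊤ : ℕ∞) f) : ContDiff ℝ (⊤ : ℕ∞) (nab pd A f) :=
  (h.smooth hf).sub (smooth_mul hA hf)

lemma IsPd.nab_comm (h : IsPd pd v) (h' : IsPd pd' v') {A A' E : P4 → Mat n}
    (hA : ContDiff ℝ (⊤ : ℕ∞) A) (hA' : ContDiff ℝ (⊤ : ℕ∞) A')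
    (hE : ContDiff ℝ (⊤ : ℕ∞) E) (p : P4) :
    nab pd A (nab pd' A' E) p = nab pd' A' (nab pd A E) p + curv pd pd' A A' p * E p := by
  have e1 := h.sub (h'.smooth hE) (smooth_mul hA' hE) p
  have e2 := h'.sub (h.smooth hE) (smooth_mul hA hE) p
  rw [h.mul hA' hE] at e1
  rw [h'.mul hA hE, ← h.comm h' hE] at e2
  change pd (nab pd' A' E) p = _ at e1
  change pd' (nab pd A E) p = _ at e2
  rw [nab, e1, nab.eq_def pd' A' (nab pd A E) p, e2, curv, nab, nab]
  noncomm_ring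

lemma IsPd.nab_lin (h : IsPd pd v) {A f g k l : P4 → Mat n} (hA : ContDiff ℝ (⊤ : ℕ∞) A)
    (a b c d : ℂ)
    (hf : ContDiff ℝ (⊤ : ℕ∞) f) (hg : ContDiff ℝ (⊤ : ℕ∞) g)
    (hk : ContDiff ℝ (⊤ : ℕ∞) k) (hl : ContDiff ℝ (⊤ : ℕ∞) l) (p : P4) :
    nab pd A (fun p => (a • f p + b • g p) + (c • k p + d • l p)) p =
      (a • nab pd A f p + b • nab pd A g p) + (c • nab pd A k p + d • nab pd A l p) := by
  have hf' := hf.const_smul a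
  have hg' := hg.const_smul b
  have hk' := hk.const_smul c
  have hl' := hl.const_smul d
  simp only [nab]
  rw [h.add (hf'.add hg') (hk'.add hl'), h.add hf' hg', h.add hk' hl', h.smul a hf, h.smul b hg,
    h.smul c hk, h.smul d hl]
  simp only [mul_add, mul_smul_comm]
  module

end

/-- the commutator -/
lemma lax_comm {n : ℕ} (A1 A2 A3 A4 : P4 → Mat n)
    (h1s : ContDiff ℝ (⊤ : ℕ∞) A1) (h2s : ContDiff ℝ (⊤ : ℕ∞) A2)
    (h3s : ContDiff ℝ (⊤ : ℕ∞) A3) (h4s : ContDiff ℝ (⊤ : ℕ∞) A4)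
    (μ : ℂ) (hμ : μ ≠ 0) (E : P4 → Mat n) (hE : ContDiff ℝ (⊤ : ℕ∞) E) (p : P4) :
    DOne A1 A2 A3 A4 μ (DTwoEucl A1 A2 A3 A4 μ E) p =
      DTwoEucl A1 A2 A3 A4 μ (DOne A1 A2 A3 A4 μ E) p +
      (4⁻¹ : ℂ) • (((-2 * I) • (curv pd3 pd4 A3 A4 p + curv pd1 pd2 A1 A2 p)
        + μ • ((curv pd1 pd3 A1 A3 p + curv pd4 pd2 A4 A2 p)
          - I • (curv pd1 pd4 A1 A4 p + curv pd2 pd3 A2 A3 p))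
        + μ⁻¹ • ((curv pd1 pd3 A1 A3 p + curv pd4 pd2 A4 A2 p)
          + I • (curv pd1 pd4 A1 A4 p + curv pd2 pd3 A2 A3 p))) * E p) := by
  have s1 := isPd1.nab_smooth h1s hE
  have s2 := isPd2.nab_smooth h2s hE
  have s3 := isPd3.nab_smooth h3s hE
  have s4 := isPd4.nab_smooth h4s hE
  have eD1 : DOne A1 A2 A3 A4 μ E = fun p =>
      ((2⁻¹ * μ) • nab pd1 A1 E p + (-(2⁻¹ * μ * I)) • nab pd2 A2 E p) +
      ((2⁻¹ : ℂ) • nab pd3 A3 E p + (2⁻¹ * I) • nab pd4 A4 E p) := by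
    funext p; simp only [DOne, nabwbar, nabz]; module
  have eD2 : DTwoEucl A1 A2 A3 A4 μ E = fun p =>
      ((-(2⁻¹ * μ⁻¹)) • nab pd1 A1 E p + (-(2⁻¹ * μ⁻¹ * I)) • nab pd2 A2 E p) +
      ((2⁻¹ : ℂ) • nab pd3 A3 E p + (-(2⁻¹ * I)) • nab pd4 A4 E p) := by
    funext p; simp only [DTwoEucl, nabw, nabzbar]; module
  rw [eD1, eD2]
  simp only [DOne, DTwoEucl, nabw, nabwbar, nabz, nabzbar]
  simp only [isPd1.nab_lin h1s _ _ _ _ s1 s2 s3 s4, isPd2.nab_lin h2s _ _ _ _ s1 s2 s3 s4,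
    isPd3.nab_lin h3s _ _ _ _ s1 s2 s3 s4, isPd4.nab_lin h4s _ _ _ _ s1 s2 s3 s4]
  rw [isPd1.nab_comm isPd2 h1s h2s hE, isPd1.nab_comm isPd3 h1s h3s hE,
    isPd1.nab_comm isPd4 h1s h4s hE, isPd2.nab_comm isPd3 h2s h3s hE,
    isPd4.nab_comm isPd2 h4s h2s hE, isPd3.nab_comm isPd4 h3s h4s hE]
  have hI : I * I = -1 := I_mul_I
  have hm : μ * μ⁻¹ = 1 := mul_inv_cancel₀ hμ
  generalize μ⁻¹ = ν at *
  simp only [add_mul, sub_mul, smul_mul_assoc]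
  match_scalars <;> grind

/-- The anti-self-dual Yang–Mills equations on Euclidean `ℝ⁴`,
`F₁₂ = −F₃₄`, `F₁₃ = −F₄₂`, `F₁₄ = −F₂₃`, hold iff for every `μ ∈ ℂ∖{0}` the operators
`∇_w̄ + μ∇_z` and `∇_w − μ⁻¹∇_z̄` commute on all smooth maps `E : ℝ⁴ → Mₙ(ℂ)`. -/
theorem asdym_euclidean_lax {n : ℕ} (A1 A2 A3 A4 : P4 → Mat n)
    (h1s : ContDiff ℝ (⊤ : ℕ∞) A1) (h2s : ContDiff ℝ (⊤ : ℕ∞) A2)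
    (h3s : ContDiff ℝ (⊤ : ℕ∞) A3) (h4s : ContDiff ℝ (⊤ : ℕ∞) A4)
    (h1a : ∀ p : P4, (A1 p)ᴴ = -(A1 p)) (h2a : ∀ p : P4, (A2 p)ᴴ = -(A2 p))
    (h3a : ∀ p : P4, (A3 p)ᴴ = -(A3 p)) (h4a : ∀ p : P4, (A4 p)ᴴ = -(A4 p)) :
    (∀ p : P4,
        curv pd1 pd2 A1 A2 p = -(curv pd3 pd4 A3 A4 p) ∧
        curv pd1 pd3 A1 A3 p = -(curv pd4 pd2 A4 A2 p) ∧
        curv pd1 pd4 A1 A4 p = -(curv pd2 pd3 A2 A3 p)) ↔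
      (∀ μ : ℂ, μ ≠ 0 → ∀ E : P4 → Mat n, ContDiff ℝ (⊤ : ℕ∞) E → ∀ p : P4,
        DOne A1 A2 A3 A4 μ (DTwoEucl A1 A2 A3 A4 μ E) p =
          DTwoEucl A1 A2 A3 A4 μ (DOne A1 A2 A3 A4 μ E) p) := by
  constructor
  · intro h μ hμ E hE p
    obtain ⟨e1, e2, e3⟩ := h p
    rw [lax_comm A1 A2 A3 A4 h1s h2s h3s h4s μ hμ E hE p, e1, e2, e3]
    simp
  · intro h p
    have key : ∀ μ : ℂ, μ ≠ 0 → _ := fun μ hμ =>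
      (lax_comm A1 A2 A3 A4 h1s h2s h3s h4s μ hμ (fun _ => 1) contDiff_const p).symm.trans
        (h μ hμ (fun _ => 1) contDiff_const p)
    simp only [add_eq_left, mul_one] at key
    have k1 := key 1 one_ne_zero
    have k2 := key (-1) (by simp)
    have k3 := key 2 two_ne_zero
    clear key
    rw [eq_neg_iff_add_eq_zero, eq_neg_iff_add_eq_zero, eq_neg_iff_add_eq_zero]
    generalize curv pd1 pd2 A1 A2 p = F12 at *
    generalize curv pd3 pd4 A3 A4 p = F34 at *
    generalize curv pd1 pd3 A1 A3 p + curv pd4 pd2 A4 A2 p = P at *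
    generalize curv pd1 pd4 A1 A4 p + curv pd2 pd3 A2 A3 p = Q at *
    have hI : I * I = -1 := I_mul_I
    refine ⟨?_, ?_, ?_⟩ <;> ext i j <;>
    · have k1 := congrFun (congrFun k1 i) j
      have k2 := congrFun (congrFun k2 i) j
      have k3 := congrFun (congrFun k3 i) j
      simp only [Matrix.add_apply, Matrix.sub_apply, Matrix.smul_apply, Matrix.zero_apply,
        smul_eq_mul] at k1 k2 k3 ⊢
      grind
end
end

section
/- Let (A,φ) be a connection and Higgs field on ℝ³. Then (A,φ) solves the space-time monopole equation if and only if for every λ ∈ ℂ∖{0} the operators L₁(λ) and L₂(λ) commute, where L₁(λ)F = λ(∂_ξF − A_ξF) − (∂_yF − A_yF) + φF and L₂(λ)F = λ⁻¹(∂_ηF − A_ηF) − (∂_yF − A_yF) − φF, i.e. L₁(λ)(L₂(λ)F) = L₂(λ)(L₁(λ)F) for every smooth map F : ℝ³ → M_n(ℂ). -/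
open Matrix Complex
open scoped Matrix ComplexConjugate

attribute [local instance] Matrix.normedAddCommGroup Matrix.normedSpace

noncomputable section

/-- Space-time `ℝ³` with coordinates `(x, y, t)`. -/
abbrev P3 : Type := ℝ × ℝ × ℝ

section PartialDerivatives

variable {W : Type*} [NormedAddCommGroup W] [NormedSpace ℝ W]

/-- Partial derivative in `x`. -/
def pdx (f : P3 → W) (p : P3) : W := deriv (fun s => f (s, p.2.1, p.2.2)) p.1

/-- Partial derivative in `y`. -/
def pdy (f : P3 → W) (p : P3) : W := deriv (fun s => f (p.1, s, p.2.2)) p.2.1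

/-- Partial derivative in `t`. -/
def pdt (f : P3 → W) (p : P3) : W := deriv (fun s => f (p.1, p.2.1, s)) p.2.2

/-- Light-cone derivative `∂_ξ = ∂_t + ∂_x`. -/
def pdxi (f : P3 → W) (p : P3) : W := pdt f p + pdx f p

/-- Light-cone derivative `∂_η = ∂_t − ∂_x`. -/
def pdeta (f : P3 → W) (p : P3) : W := pdt f p - pdx f p

end PartialDerivatives

/-- `∂_z = ½(∂_x − i ∂_y)`. -/
def pdz {n : ℕ} (f : P3 → Mat n) (p : P3) : Mat n :=
  (2⁻¹ : ℂ) • (pdx f p - Complex.I • pdy f p)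

/-- `∂_z̄ = ½(∂_x + i ∂_y)`. -/
def pdzbar {n : ℕ} (f : P3 → Mat n) (p : P3) : Mat n :=
  (2⁻¹ : ℂ) • (pdx f p + Complex.I • pdy f p)

/-- Commutator `[X, Y] = XY − YX`. -/
def brk {n : ℕ} (X Y : Mat n) : Mat n := X * Y - Y * X

/-- Anti-Hermitian-valued map. -/
def SkewHerm {n : ℕ} (f : P3 → Mat n) : Prop := ∀ p : P3, (f p)ᴴ = -(f p)

/-- The space-time monopole equation `F_{xy} = −∇_tφ`, `F_{xt} = −∇_yφ`, `F_{yt} = ∇_xφ`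
for the connection `(Ax, Ay, At)` and Higgs field `Ph`, at the point `p`. -/
def MonopoleEqAt {n : ℕ} (Ax Ay At Ph : P3 → Mat n) (p : P3) : Prop :=
  (-(pdx Ay p) + pdy Ax p + brk (Ax p) (Ay p) = -(pdt Ph p - brk (At p) (Ph p))) ∧
  (-(pdx At p) + pdt Ax p + brk (Ax p) (At p) = -(pdy Ph p - brk (Ay p) (Ph p))) ∧
  (-(pdy At p) + pdt Ay p + brk (Ay p) (At p) = pdx Ph p - brk (Ax p) (Ph p))

/-- The space-time monopole equation on all of `ℝ³`. -/
def MonopoleEq {n : ℕ} (Ax Ay At Ph : P3 → Mat n) : Prop :=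
  ∀ p : P3, MonopoleEqAt Ax Ay At Ph p

/-- `E` solves the `μ`-linear system for `(A, φ)`. -/
def SolvesMu {n : ℕ} (Ax Ay At Ph : P3 → Mat n) (μ : ℂ) (E : P3 → Mat n) : Prop :=
  ∀ p : P3,
    (2⁻¹ : ℂ) • pdt E p + μ • pdz E p =
      ((2⁻¹ : ℂ) • (At p + Complex.I • Ph p) +
        μ • ((2⁻¹ : ℂ) • (Ax p - Complex.I • Ay p))) * E p ∧
    (2⁻¹ : ℂ) • pdt E p + μ⁻¹ • pdzbar E p =
      ((2⁻¹ : ℂ) • (At p - Complex.I • Ph p) +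
        μ⁻¹ • ((2⁻¹ : ℂ) • (Ax p + Complex.I • Ay p))) * E p

/-- `F` solves the `λ`-linear system for `(A, φ)`. -/
def SolvesLam {n : ℕ} (Ax Ay At Ph : P3 → Mat n) (lm : ℂ) (F : P3 → Mat n) : Prop :=
  ∀ p : P3,
    lm • pdxi F p - pdy F p = (lm • (At p + Ax p) - (Ay p + Ph p)) * F p ∧
    lm⁻¹ • pdeta F p - pdy F p = (lm⁻¹ • (At p - Ax p) - (Ay p - Ph p)) * F p

/-- The operator `L₁(λ) = λ(∂_ξ − A_ξ) − (∂_y − A_y) + φ`. -/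
def LOneOp {n : ℕ} (Ax Ay At Ph : P3 → Mat n) (lm : ℂ) (F : P3 → Mat n) : P3 → Mat n :=
  fun p =>
    lm • (pdxi F p - (At p + Ax p) * F p) - (pdy F p - Ay p * F p) + Ph p * F p

/-- The operator `L₂(λ) = λ⁻¹(∂_η − A_η) − (∂_y − A_y) − φ`. -/
def LTwoOp {n : ℕ} (Ax Ay At Ph : P3 → Mat n) (lm : ℂ) (F : P3 → Mat n) : P3 → Mat n :=
  fun p =>
    lm⁻¹ • (pdeta F p - (At p - Ax p) * F p) - (pdy F p - Ay p * F p) - Ph p * F p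

abbrev Sm {n : ℕ} (F : P3 → Mat n) : Prop := ContDiff ℝ (⊤ : ℕ∞) F

def dv {n : ℕ} (v : P3) (F : P3 → Mat n) : P3 → Mat n := fun p => fderiv ℝ F p v

section generic
variable {W : Type*} [NormedAddCommGroup W] [NormedSpace ℝ W] {F G : P3 → W}

theorem gen_sm (v : P3) (h : ContDiff ℝ (⊤ : ℕ∞) F) :
    ContDiff ℝ (⊤ : ℕ∞) (fun p => fderiv ℝ F p v) := by
  have h1 : ContDiff ℝ (⊤ : ℕ∞) (fderiv ℝ F) := h.fderiv_right (by simp)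
  exact h1.clm_apply contDiff_const

theorem gen_add (v p : P3) (hF : DifferentiableAt ℝ F p) (hG : DifferentiableAt ℝ G p) :
    fderiv ℝ (F + G) p v = fderiv ℝ F p v + fderiv ℝ G p v := by
  simp [fderiv_add hF hG]

theorem gen_sub (v p : P3) (hF : DifferentiableAt ℝ F p) (hG : DifferentiableAt ℝ G p) :
    fderiv ℝ (F - G) p v = fderiv ℝ F p v - fderiv ℝ G p v := by
  simp [fderiv_sub hF hG]

theorem gen_clm (L : W →ₗ[ℝ] W) [FiniteDimensional ℝ W] (v p : P3)
    (hF : DifferentiableAt ℝ F p) :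
    fderiv ℝ (fun q => L (F q)) p v = L (fderiv ℝ F p v) := by
  have h := ((LinearMap.toContinuousLinearMap L).hasFDerivAt.comp p hF.hasFDerivAt).fderiv
  have h2 := congrArg (fun L => L v) h
  exact h2

theorem gen_mul_sm [FiniteDimensional ℝ W] (m : W →ₗ[ℝ] W →ₗ[ℝ] W)
    (hF : ContDiff ℝ (⊤ : ℕ∞) F) (hG : ContDiff ℝ (⊤ : ℕ∞) G) :
    ContDiff ℝ (⊤ : ℕ∞) (fun p => m (F p) (G p)) :=
  ((LinearMap.toContinuousBilinearMap m).contDiff.comp hF).clm_apply hG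

theorem gen_mul [FiniteDimensional ℝ W] (m : W →ₗ[ℝ] W →ₗ[ℝ] W) (v p : P3)
    (hF : DifferentiableAt ℝ F p) (hG : DifferentiableAt ℝ G p) :
    fderiv ℝ (fun p => m (F p) (G p)) p v =
      m (fderiv ℝ F p v) (G p) + m (F p) (fderiv ℝ G p v) := by
  have h := (LinearMap.toContinuousBilinearMap m).hasFDerivAt_of_bilinear
    hF.hasFDerivAt hG.hasFDerivAt
  have h2 := congrArg (fun L => L v) h.fderiv
  exact h2.trans (add_comm _ _)

theorem gen_comm (v w p : P3) (hF : ContDiff ℝ (⊤ : ℕ∞) F) :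
    fderiv ℝ (fun q => fderiv ℝ F q w) p v = fderiv ℝ (fun q => fderiv ℝ F q v) p w := by
  have h0 : Differentiable ℝ F := hF.differentiable (by simp)
  have h1 : Differentiable ℝ (fderiv ℝ F) :=
    ContDiff.differentiable (n := (⊤ : ℕ∞)) (hF.fderiv_right (by simp)) (by simp)
  have key : ∀ a b : P3, fderiv ℝ (fun q => fderiv ℝ F q b) p a
      = fderiv ℝ (fderiv ℝ F) p a b := by
    intro a b
    have := ((h1 p).hasFDerivAt.clm_apply (hasFDerivAt_const b p)).fderiv
    have h2 := congrArg (fun L => L a) this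
    simpa using h2
  rw [key, key]
  exact second_derivative_symmetric (fun y => (h0 y).hasFDerivAt) (h1 p).hasFDerivAt v w

end generic

section helpers
variable {n : ℕ} {F G : P3 → Mat n}

theorem Sm.diff (h : Sm F) : Differentiable ℝ F := h.differentiable (by simp)

theorem sm_dv (v : P3) (h : Sm F) : Sm (dv v F) := gen_sm v h

theorem pdx_eq (h : Sm F) : pdx F = dv (1, 0, 0) F := by
  funext p
  have h1 : HasDerivAt (fun s : ℝ => ((s, p.2.1, p.2.2) : P3)) (1, 0, 0) p.1 :=
    (hasDerivAt_id p.1).prodMk (hasDerivAt_const _ _)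
  exact ((h.diff p).hasFDerivAt.comp_hasDerivAt p.1 h1).deriv

theorem pdy_eq (h : Sm F) : pdy F = dv (0, 1, 0) F := by
  funext p
  have h1 : HasDerivAt (fun s : ℝ => ((p.1, s, p.2.2) : P3)) (0, 1, 0) p.2.1 :=
    (hasDerivAt_const _ _).prodMk ((hasDerivAt_id p.2.1).prodMk (hasDerivAt_const _ _))
  exact ((h.diff p).hasFDerivAt.comp_hasDerivAt p.2.1 h1).deriv

theorem pdt_eq (h : Sm F) : pdt F = dv (0, 0, 1) F := by
  funext p
  have h1 : HasDerivAt (fun s : ℝ => ((p.1, p.2.1, s) : P3)) (0, 0, 1) p.2.2 :=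
    (hasDerivAt_const _ _).prodMk ((hasDerivAt_const _ _).prodMk (hasDerivAt_id p.2.2))
  exact ((h.diff p).hasFDerivAt.comp_hasDerivAt p.2.2 h1).deriv

theorem dv_add (v : P3) (hF : Sm F) (hG : Sm G) : dv v (F + G) = dv v F + dv v G :=
  funext fun p => gen_add v p (hF.diff p) (hG.diff p)

theorem dv_sub (v : P3) (hF : Sm F) (hG : Sm G) : dv v (F - G) = dv v F - dv v G :=
  funext fun p => gen_sub v p (hF.diff p) (hG.diff p)

theorem fin_mat : FiniteDimensional ℝ (Mat n) := FiniteDimensional.complexToReal _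

def smL (n : ℕ) (c : ℂ) : Mat n →ₗ[ℝ] Mat n where
  toFun X := c • X
  map_add' := by intros; simp
  map_smul' := by intro r x; exact smul_comm c r x

theorem dv_smul (v : P3) (c : ℂ) (hF : Sm F) : dv v (c • F) = c • dv v F :=
  funext fun p => @gen_clm (Mat n) _ _ F (smL n c) fin_mat v p (hF.diff p)

theorem sm_mul (hF : Sm F) (hG : Sm G) : Sm (F * G) :=
  @gen_mul_sm (Mat n) _ _ F G fin_mat (LinearMap.mul ℝ (Mat n)) hF hG

theorem sm_smul (c : ℂ) (hF : Sm F) : Sm (c • F) := ContDiff.const_smul c hF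

theorem dv_mul (v : P3) (hF : Sm F) (hG : Sm G) :
    dv v (F * G) = dv v F * G + F * dv v G :=
  funext fun p =>
    @gen_mul (Mat n) _ _ F G fin_mat (LinearMap.mul ℝ (Mat n)) v p (hF.diff p) (hG.diff p)

theorem dv_comm (v w : P3) (hF : Sm F) : dv v (dv w F) = dv w (dv v F) :=
  funext fun p => gen_comm v w p hF

theorem LOne_eq (Ax Ay At Ph : P3 → Mat n) (lm : ℂ) (h : Sm F) :
    LOneOp Ax Ay At Ph lm F = lm • (dv (0, 0, 1) F + dv (1, 0, 0) F - (At + Ax) * F)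
      - (dv (0, 1, 0) F - Ay * F) + Ph * F := by
  rw [← pdx_eq h, ← pdy_eq h, ← pdt_eq h]; rfl

theorem LTwo_eq (Ax Ay At Ph : P3 → Mat n) (lm : ℂ) (h : Sm F) :
    LTwoOp Ax Ay At Ph lm F = lm⁻¹ • (dv (0, 0, 1) F - dv (1, 0, 0) F - (At - Ax) * F)
      - (dv (0, 1, 0) F - Ay * F) - Ph * F := by
  rw [← pdx_eq h, ← pdy_eq h, ← pdt_eq h]; rfl

theorem Sm.add (hF : Sm F) (hG : Sm G) : Sm (F + G) := ContDiff.add hF hG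
theorem Sm.sub (hF : Sm F) (hG : Sm G) : Sm (F - G) := ContDiff.sub hF hG

/-- defects of the three equations -/
def e1 (Ax Ay At Ph : P3 → Mat n) : P3 → Mat n :=
  -(dv (1, 0, 0) Ay) + dv (0, 1, 0) Ax + (Ax * Ay - Ay * Ax) + (dv (0, 0, 1) Ph - (At * Ph - Ph * At))
def e2 (Ax Ay At Ph : P3 → Mat n) : P3 → Mat n :=
  -(dv (1, 0, 0) At) + dv (0, 0, 1) Ax + (Ax * At - At * Ax) + (dv (0, 1, 0) Ph - (Ay * Ph - Ph * Ay))
def e3 (Ax Ay At Ph : P3 → Mat n) : P3 → Mat n :=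
  -(dv (0, 1, 0) At) + dv (0, 0, 1) Ay + (Ay * At - At * Ay) - (dv (1, 0, 0) Ph - (Ax * Ph - Ph * Ax))

theorem monopole_iff {Ax Ay At Ph : P3 → Mat n} (hx : Sm Ax) (hy : Sm Ay) (ht : Sm At)
    (hp : Sm Ph) : MonopoleEq Ax Ay At Ph ↔
      ∀ p, e1 Ax Ay At Ph p = 0 ∧ e2 Ax Ay At Ph p = 0 ∧ e3 Ax Ay At Ph p = 0 := by
  unfold MonopoleEq MonopoleEqAt
  simp only [pdx_eq hx, pdx_eq hy, pdx_eq ht, pdx_eq hp, pdy_eq hx, pdy_eq hy, pdy_eq ht,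
    pdy_eq hp, pdt_eq hx, pdt_eq hy, pdt_eq ht, pdt_eq hp, e1, e2, e3, brk, Pi.add_apply,
    Pi.sub_apply, Pi.mul_apply, Pi.neg_apply]
  refine forall_congr' fun p => and_congr ?_ (and_congr ?_ ?_)
  · rw [eq_neg_iff_add_eq_zero]
  · rw [eq_neg_iff_add_eq_zero]
  · rw [sub_eq_zero]

set_option maxHeartbeats 1000000 in
theorem comm_formula {Ax Ay At Ph : P3 → Mat n} (hx : Sm Ax) (hy : Sm Ay) (ht : Sm At)
    (hp : Sm Ph) (lm : ℂ) (hl : lm ≠ 0) (hF : Sm F) :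
    LOneOp Ax Ay At Ph lm (LTwoOp Ax Ay At Ph lm F) -
      LTwoOp Ax Ay At Ph lm (LOneOp Ax Ay At Ph lm F) =
    ((2 : ℂ) • e2 Ax Ay At Ph - lm • (e1 Ax Ay At Ph - e3 Ax Ay At Ph)
      - lm⁻¹ • (e1 Ax Ay At Ph + e3 Ax Ay At Ph)) * F := by
  have hX := sm_dv (1, 0, 0) hF
  have hY := sm_dv (0, 1, 0) hF
  have hT := sm_dv (0, 0, 1) hF
  have a1 := sm_smul lm ((hT.add hX).sub (sm_mul (ht.add hx) hF))
  have a2 := sm_smul lm⁻¹ ((hT.sub hX).sub (sm_mul (ht.sub hx) hF))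
  have b := hY.sub (sm_mul hy hF)
  have c := sm_mul hp hF
  have s1 := (a1.sub b).add c
  have s2 := (a2.sub b).sub c
  rw [LOne_eq Ax Ay At Ph lm hF, LTwo_eq Ax Ay At Ph lm hF, LOne_eq _ _ _ _ _ s2,
    LTwo_eq _ _ _ _ _ s1]
  have d1 : ∀ v, dv v (lm • (dv (0, 0, 1) F + dv (1, 0, 0) F - (At + Ax) * F)
      - (dv (0, 1, 0) F - Ay * F) + Ph * F) =
      lm • (dv v (dv (0, 0, 1) F) + dv v (dv (1, 0, 0) F) -
        ((dv v At + dv v Ax) * F + (At + Ax) * dv v F))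
      - (dv v (dv (0, 1, 0) F) - (dv v Ay * F + Ay * dv v F)) + (dv v Ph * F + Ph * dv v F) := by
    intro v
    rw [dv_add v (a1.sub b) c, dv_sub v a1 b,
      dv_smul v lm ((hT.add hX).sub (sm_mul (ht.add hx) hF)),
      dv_sub v (hT.add hX) (sm_mul (ht.add hx) hF), dv_add v hT hX, dv_mul v (ht.add hx) hF,
      dv_add v ht hx, dv_sub v hY (sm_mul hy hF), dv_mul v hy hF, dv_mul v hp hF]
  have d2 : ∀ v, dv v (lm⁻¹ • (dv (0, 0, 1) F - dv (1, 0, 0) F - (At - Ax) * F)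
      - (dv (0, 1, 0) F - Ay * F) - Ph * F) =
      lm⁻¹ • (dv v (dv (0, 0, 1) F) - dv v (dv (1, 0, 0) F) -
        ((dv v At - dv v Ax) * F + (At - Ax) * dv v F))
      - (dv v (dv (0, 1, 0) F) - (dv v Ay * F + Ay * dv v F)) - (dv v Ph * F + Ph * dv v F) := by
    intro v
    rw [dv_sub v (a2.sub b) c, dv_sub v a2 b,
      dv_smul v lm⁻¹ ((hT.sub hX).sub (sm_mul (ht.sub hx) hF)),
      dv_sub v (hT.sub hX) (sm_mul (ht.sub hx) hF), dv_sub v hT hX, dv_mul v (ht.sub hx) hF,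
      dv_sub v ht hx, dv_sub v hY (sm_mul hy hF), dv_mul v hy hF, dv_mul v hp hF]
  simp only [d1, d2]
  rw [dv_comm (0, 0, 1) (1, 0, 0) hF, dv_comm (0, 0, 1) (0, 1, 0) hF,
    dv_comm (1, 0, 0) (0, 1, 0) hF]
  simp only [e1, e2, e3, smul_sub, smul_add, mul_sub, mul_add, sub_mul, add_mul, neg_mul, mul_neg,
    smul_neg, mul_smul_comm, smul_mul_assoc, smul_smul, ← mul_assoc, mul_inv_cancel₀ hl,
    inv_mul_cancel₀ hl, one_smul]
  module

end helpers

/-- `(A, φ)` solves the space-time monopole equation iff for every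
`λ ∈ ℂ∖{0}` the operators `L₁(λ)` and `L₂(λ)` commute on all smooth maps `F : ℝ³ → Mₙ(ℂ)`. -/
theorem monopole_lax_lambda {n : ℕ} (Ax Ay At Ph : P3 → Mat n)
    (hxs : ContDiff ℝ (⊤ : ℕ∞) Ax) (hys : ContDiff ℝ (⊤ : ℕ∞) Ay)
    (hts : ContDiff ℝ (⊤ : ℕ∞) At) (hps : ContDiff ℝ (⊤ : ℕ∞) Ph)
    (hxa : SkewHerm Ax) (hya : SkewHerm Ay) (hta : SkewHerm At) (hpa : SkewHerm Ph) :
    MonopoleEq Ax Ay At Ph ↔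
      (∀ lm : ℂ, lm ≠ 0 → ∀ F : P3 → Mat n, ContDiff ℝ (⊤ : ℕ∞) F → ∀ p : P3,
        LOneOp Ax Ay At Ph lm (LTwoOp Ax Ay At Ph lm F) p =
          LTwoOp Ax Ay At Ph lm (LOneOp Ax Ay At Ph lm F) p) := by
  rw [monopole_iff hxs hys hts hps]
  constructor
  · intro h lm hl F hF p
    have := congrFun (comm_formula hxs hys hts hps lm hl hF) p
    obtain ⟨h1, h2, h3⟩ := h p
    rw [← sub_eq_zero]
    refine this.trans ?_
    simp [h1, h2, h3]
  · intro h p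
    have key : ∀ lm : ℂ, lm ≠ 0 →
        (2 : ℂ) • e2 Ax Ay At Ph p - lm • (e1 Ax Ay At Ph p - e3 Ax Ay At Ph p)
          - lm⁻¹ • (e1 Ax Ay At Ph p + e3 Ax Ay At Ph p) = 0 := by
      intro lm hl
      have h1 : Sm (1 : P3 → Mat n) := contDiff_const
      have := congrFun (comm_formula hxs hys hts hps lm hl h1) p
      rw [mul_one, Pi.sub_apply, sub_eq_zero.2 (h lm hl 1 h1 p)] at this
      exact this.symm
    have k1 := key 1 (by norm_num)
    have k2 := key (-1) (by norm_num)
    have k3 := key 2 (by norm_num)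
    generalize e1 Ax Ay At Ph p = a at *
    generalize e2 Ax Ay At Ph p = b at *
    generalize e3 Ax Ay At Ph p = c at *
    try clear h key
    have hb : b = 0 := by
      linear_combination (norm := module) (1 / 4 : ℂ) • k1 + (1 / 4 : ℂ) • k2
    have ha : a = 0 := by
      linear_combination (norm := module) (1 / 4 : ℂ) • k2 - (1 / 4 : ℂ) • k1
    subst ha hb
    refine ⟨rfl, rfl, ?_⟩
    linear_combination (norm := module) (2 / 3 : ℂ) • k3
end
end

section
/- Let (A,φ) be a connection and Higgs field on ℝ³ solving the space-time monopole equation such that A_x, A_y, A_t, φ are all independent of t. Suppose g : ℝ³ → GL(n,ℂ) is smooth, independent of t, and satisfies (∂_zg)g⁻¹ = A_z + ½(A_t + iφ) and (∂_z̄g)g⁻¹ = A_z̄ + ½(A_t − iφ). Set α = g⁻¹(A_t + iφ)g and β = g⁻¹(A_t − iφ)g. Then for every μ ∈ ℂ∖{0} the operators ∂_z + ((1−μ⁻¹)/2)α and ∂_z̄ + ((1−μ)/2)β commute on smooth matrix-valued maps; equivalently ((1−μ)/2)∂_zβ − ((1−μ⁻¹)/2)∂_z̄α + ((1−μ⁻¹)/2)((1−μ)/2)[α,β]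 = 0 for all μ ∈ ℂ∖{0} (the Lax pair of a harmonic map). -/
open Matrix Complex
open scoped Matrix ComplexConjugate

attribute [local instance] Matrix.normedAddCommGroup Matrix.normedSpace

noncomputable section

theorem hd_mul {n : ℕ} {a b : ℝ → Mat n} {a' b' : Mat n} {s : ℝ}
    (ha : HasDerivAt a a' s) (hb : HasDerivAt b b' s) :
    HasDerivAt (fun t => a t * b t) (a' * b s + a s * b') s := by
  let := @Matrix.linftyOpNormedRing (Fin n) ℂ _ _ _
  let := @Matrix.linftyOpNormedAlgebra ℝ (Fin n) ℂ _ _ _ _ _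
  exact HasDerivAt.mul ha hb

theorem hd_inv_gen {R : Type*} [NormedRing R] [NormedAlgebra ℝ R] [CompleteSpace R]
    {a : ℝ → R} {a' : R} {s : ℝ} (ha : HasDerivAt a a' s) (hu : IsUnit (a s)) :
    HasDerivAt (fun t => Ring.inverse (a t))
      (-(Ring.inverse (a s) * a' * Ring.inverse (a s))) s := by
  obtain ⟨u, hu⟩ := hu
  have h1 := hasFDerivAt_ringInverse (𝕜 := ℝ) u
  have h2 := (hu ▸ h1 : HasFDerivAt Ring.inverse _ (a s)).comp_hasDerivAt s ha
  rw [← hu, Ring.inverse_unit]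
  have e : (-(↑u⁻¹ * a' * ↑u⁻¹) : R) = (-ContinuousLinearMap.mulLeftRight ℝ R ↑u⁻¹ ↑u⁻¹) a' := by
    simp
  rw [e]
  exact h2

theorem hd_inv {n : ℕ} {a : ℝ → Mat n} {a' : Mat n} {s : ℝ}
    (ha : HasDerivAt a a' s) (hu : IsUnit (a s)) :
    HasDerivAt (fun t => (a t)⁻¹) (-((a s)⁻¹ * a' * (a s)⁻¹)) s := by
  simp only [Matrix.nonsing_inv_eq_ringInverse]
  let i1 := @Matrix.linftyOpNormedRing (Fin n) ℂ _ _ _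
  let i2 := @Matrix.linftyOpNormedAlgebra ℝ (Fin n) ℂ _ _ _ _ _
  have i3 : @CompleteSpace (Mat n) i1.toMetricSpace.toUniformSpace :=
    FiniteDimensional.complete ℝ (Mat n)
  exact @hd_inv_gen (Mat n) i1 i2 i3 a a' s ha hu

theorem hd_conj {n : ℕ} {a m : ℝ → Mat n} {a' m' : Mat n} {s : ℝ}
    (ha : HasDerivAt a a' s) (hm : HasDerivAt m m' s) (hu : IsUnit (a s)) :
    HasDerivAt (fun t => (a t)⁻¹ * m t * a t)
      ((a s)⁻¹ * (m' + m s * (a' * (a s)⁻¹) - (a' * (a s)⁻¹) * m s) * a s) s := by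
  have h := hd_mul (hd_mul (hd_inv ha hu) hm) ha
  have e : (a s)⁻¹ * a s = 1 :=
    Matrix.nonsing_inv_mul _ ((Matrix.isUnit_iff_isUnit_det _).1 hu)
  convert h using 1
  simp only [mul_add, add_mul, mul_sub, sub_mul, mul_assoc, e, mul_one, neg_mul]
  abel

theorem hd_x {n : ℕ} {f : P3 → Mat n} (hf : ContDiff ℝ (⊤ : ℕ∞) f) (p : P3) :
    HasDerivAt (fun s => f (s, p.2.1, p.2.2)) (pdx f p) p.1 := by
  have hd : Differentiable ℝ f := hf.differentiable (by simp)
  have hc : Differentiable ℝ (fun s : ℝ => ((s, p.2.1, p.2.2) : P3)) := by fun_prop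
  exact ((hd.comp hc) p.1).hasDerivAt

theorem hd_y {n : ℕ} {f : P3 → Mat n} (hf : ContDiff ℝ (⊤ : ℕ∞) f) (p : P3) :
    HasDerivAt (fun s => f (p.1, s, p.2.2)) (pdy f p) p.2.1 := by
  have hd : Differentiable ℝ f := hf.differentiable (by simp)
  have hc : Differentiable ℝ (fun s : ℝ => ((p.1, s, p.2.2) : P3)) := by fun_prop
  exact ((hd.comp hc) p.2.1).hasDerivAt

theorem pdx_conj {n : ℕ} {g m : P3 → Mat n} (hg : ContDiff ℝ (⊤ : ℕ∞) g)
    (hm : ContDiff ℝ (⊤ : ℕ∞) m) (hu : ∀ p, IsUnit (g p)) (p : P3) :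
    pdx (fun q => (g q)⁻¹ * m q * g q) p = (g p)⁻¹ * (pdx m p + m p * (pdx g p * (g p)⁻¹)
      - (pdx g p * (g p)⁻¹) * m p) * g p :=
  (hd_conj (hd_x hg p) (hd_x hm p) (hu _)).deriv

theorem pdy_conj {n : ℕ} {g m : P3 → Mat n} (hg : ContDiff ℝ (⊤ : ℕ∞) g)
    (hm : ContDiff ℝ (⊤ : ℕ∞) m) (hu : ∀ p, IsUnit (g p)) (p : P3) :
    pdy (fun q => (g q)⁻¹ * m q * g q) p = (g p)⁻¹ * (pdy m p + m p * (pdy g p * (g p)⁻¹)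
      - (pdy g p * (g p)⁻¹) * m p) * g p :=
  (hd_conj (hd_y hg p) (hd_y hm p) (hu _)).deriv

theorem pdz_conj {n : ℕ} {g m : P3 → Mat n} (hg : ContDiff ℝ (⊤ : ℕ∞) g)
    (hm : ContDiff ℝ (⊤ : ℕ∞) m) (hu : ∀ p, IsUnit (g p)) (p : P3) :
    pdz (fun q => (g q)⁻¹ * m q * g q) p = (g p)⁻¹ * (pdz m p + m p * (pdz g p * (g p)⁻¹)
      - (pdz g p * (g p)⁻¹) * m p) * g p := by
  unfold pdz
  rw [pdx_conj hg hm hu, pdy_conj hg hm hu]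
  simp only [mul_add, add_mul, mul_sub, sub_mul, mul_assoc, smul_mul_assoc, mul_smul_comm]
  module

theorem pdzbar_conj {n : ℕ} {g m : P3 → Mat n} (hg : ContDiff ℝ (⊤ : ℕ∞) g)
    (hm : ContDiff ℝ (⊤ : ℕ∞) m) (hu : ∀ p, IsUnit (g p)) (p : P3) :
    pdzbar (fun q => (g q)⁻¹ * m q * g q) p = (g p)⁻¹ * (pdzbar m p + m p * (pdzbar g p * (g p)⁻¹)
      - (pdzbar g p * (g p)⁻¹) * m p) * g p := by
  unfold pdzbar
  rw [pdx_conj hg hm hu, pdy_conj hg hm hu]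
  simp only [mul_add, add_mul, mul_sub, sub_mul, mul_assoc, smul_mul_assoc, mul_smul_comm]
  module

theorem alg_aux {n : ℕ} (X Y T P xT yT xP yP : Mat n) (c : ℂ) (hc : c * c = -1)
    (h2 : -xT + brk X T = -(yP - brk Y P)) (h3 : -yT + brk Y T = xP - brk X P) :
    (2⁻¹ : ℂ) • ((xT + c • xP) + c • (yT + c • yP)) =
      brk ((2⁻¹ : ℂ) • (X + c • Y)) (T + c • P) := by
  have e2 : xT = brk X T + (yP - brk Y P) := by
    rw [← neg_neg (yP - brk Y P), ← h2]; abel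
  have e3 : yT = brk Y T - (xP - brk X P) := by rw [← h3]; abel
  rw [e2, e3]
  unfold brk
  simp only [mul_add, add_mul, mul_sub, sub_mul, smul_mul_assoc, mul_smul_comm, smul_add,
    smul_sub, smul_smul, hc]
  match_scalars <;> first
    | linear_combination (0 : ℂ) * hc
    | linear_combination (2⁻¹ : ℂ) * hc
    | linear_combination (-2⁻¹ : ℂ) * hc

theorem pd_add {n : ℕ} {f h : P3 → Mat n} (hf : ContDiff ℝ (⊤ : ℕ∞) f)
    (hh : ContDiff ℝ (⊤ : ℕ∞) h) (c : ℂ) (p : P3) :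
    pdx (fun q => f q + c • h q) p = pdx f p + c • pdx h p ∧
    pdy (fun q => f q + c • h q) p = pdy f p + c • pdy h p :=
  ⟨((hd_x hf p).add ((hd_x hh p).const_smul c)).deriv,
    ((hd_y hf p).add ((hd_y hh p).const_smul c)).deriv⟩

/-- A time-independent solution of the space-time monopole equation,
after fixing the gauge at `μ = 1` by `g`, yields the Lax pair of a harmonic map: with
`α = g⁻¹(A_t + iφ)g` and `β = g⁻¹(A_t − iφ)g`, for every `μ ∈ ℂ∖{0}` one has
`((1−μ)/2)∂_zβ − ((1−μ⁻¹)/2)∂_z̄α + ((1−μ⁻¹)/2)((1−μ)/2)[α,β] = 0`. -/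
theorem stationary_monopole_harmonic_lax {n : ℕ} (Ax Ay At Ph : P3 → Mat n)
    (hxs : ContDiff ℝ (⊤ : ℕ∞) Ax) (hys : ContDiff ℝ (⊤ : ℕ∞) Ay)
    (hts : ContDiff ℝ (⊤ : ℕ∞) At) (hps : ContDiff ℝ (⊤ : ℕ∞) Ph)
    (hxa : SkewHerm Ax) (hya : SkewHerm Ay) (hta : SkewHerm At) (hpa : SkewHerm Ph)
    (hmono : MonopoleEq Ax Ay At Ph)
    (hAxt : ∀ x y t t' : ℝ, Ax (x, y, t) = Ax (x, y, t'))
    (hAyt : ∀ x y t t' : ℝ, Ay (x, y, t) = Ay (x, y, t'))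
    (hAtt : ∀ x y t t' : ℝ, At (x, y, t) = At (x, y, t'))
    (hPht : ∀ x y t t' : ℝ, Ph (x, y, t) = Ph (x, y, t'))
    (g : P3 → Mat n) (hgs : ContDiff ℝ (⊤ : ℕ∞) g) (hgl : ∀ p : P3, IsUnit (g p))
    (hgt : ∀ x y t t' : ℝ, g (x, y, t) = g (x, y, t'))
    (hgz : ∀ p : P3, pdz g p * (g p)⁻¹ =
      (2⁻¹ : ℂ) • (Ax p - Complex.I • Ay p) + (2⁻¹ : ℂ) • (At p + Complex.I • Ph p))
    (hgzbar : ∀ p : P3, pdzbar g p * (g p)⁻¹ =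
      (2⁻¹ : ℂ) • (Ax p + Complex.I • Ay p) + (2⁻¹ : ℂ) • (At p - Complex.I • Ph p)) :
    ∀ μ : ℂ, μ ≠ 0 → ∀ p : P3,
      ((1 - μ) / 2) • pdz (fun q => (g q)⁻¹ * (At q - Complex.I • Ph q) * g q) p -
        ((1 - μ⁻¹) / 2) • pdzbar (fun q => (g q)⁻¹ * (At q + Complex.I • Ph q) * g q) p +
        (((1 - μ⁻¹) / 2) * ((1 - μ) / 2)) •
          brk ((g p)⁻¹ * (At p + Complex.I • Ph p) * g p)
            ((g p)⁻¹ * (At p - Complex.I • Ph p) * g p) = 0 := by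
  intro μ hμ p
  have hI : Complex.I * Complex.I = -1 := Complex.I_mul_I
  have hxt : pdt Ax p = 0 := by
    unfold pdt
    rw [show (fun s => Ax (p.1, p.2.1, s)) = fun _ => Ax (p.1, p.2.1, 0) from
      funext fun s => hAxt _ _ _ _, deriv_const]
  have hyt : pdt Ay p = 0 := by
    unfold pdt
    rw [show (fun s => Ay (p.1, p.2.1, s)) = fun _ => Ay (p.1, p.2.1, 0) from
      funext fun s => hAyt _ _ _ _, deriv_const]
  obtain ⟨-, h2, h3⟩ := hmono p
  rw [hxt, add_zero] at h2
  rw [hyt, add_zero] at h3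
  have hP : ContDiff ℝ (⊤ : ℕ∞) (fun q => At q + Complex.I • Ph q) :=
    hts.add (hps.const_smul Complex.I)
  have hQ : ContDiff ℝ (⊤ : ℕ∞) (fun q => At q - Complex.I • Ph q) :=
    hts.sub (hps.const_smul Complex.I)
  have eP : pdzbar (fun q => At q + Complex.I • Ph q) p =
      brk ((2⁻¹ : ℂ) • (Ax p + Complex.I • Ay p)) (At p + Complex.I • Ph p) := by
    rw [← alg_aux _ _ _ _ _ _ _ _ Complex.I hI h2 h3]
    unfold pdzbar
    rw [(pd_add hts hps _ p).1, (pd_add hts hps _ p).2]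
  have eQ : pdz (fun q => At q - Complex.I • Ph q) p =
      brk ((2⁻¹ : ℂ) • (Ax p - Complex.I • Ay p)) (At p - Complex.I • Ph p) := by
    have := alg_aux _ _ _ _ _ _ _ _ (-Complex.I) (by rw [neg_mul_neg, hI]) h2 h3
    simp only [sub_eq_add_neg, ← neg_smul]
    rw [← this]
    unfold pdz
    rw [(pd_add hts hps _ p).1, (pd_add hts hps _ p).2]
    simp only [sub_eq_add_neg, ← neg_smul]
  rw [pdz_conj hgs hQ hgl, pdzbar_conj hgs hP hgl, hgz, hgzbar, eP, eQ]
  have e : g p * (g p)⁻¹ = 1 :=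
    Matrix.mul_nonsing_inv _ ((Matrix.isUnit_iff_isUnit_det _).1 (hgl p))
  generalize At p + Complex.I • Ph p = P
  generalize At p - Complex.I • Ph p = Q
  generalize (2⁻¹ : ℂ) • (Ax p + Complex.I • Ay p) = B
  generalize (2⁻¹ : ℂ) • (Ax p - Complex.I • Ay p) = C
  have k1 : brk ((g p)⁻¹ * P * g p) ((g p)⁻¹ * Q * g p) = (g p)⁻¹ * (P * Q - Q * P) * g p := by
    have : ∀ U V : Mat n, (g p)⁻¹ * U * g p * ((g p)⁻¹ * V * g p) = (g p)⁻¹ * (U * V) * g p := by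
      intro U V
      calc _ = (g p)⁻¹ * U * (g p * (g p)⁻¹) * V * g p := by simp only [mul_assoc]
        _ = _ := by rw [e]; simp only [mul_assoc, mul_one, one_mul]
    unfold brk
    rw [this, this, mul_sub, sub_mul]
  have k2 : brk C Q + Q * (C + (2⁻¹ : ℂ) • P) - (C + (2⁻¹ : ℂ) • P) * Q =
      (-2⁻¹ : ℂ) • (P * Q - Q * P) := by
    unfold brk
    simp only [mul_add, add_mul, smul_mul_assoc, mul_smul_comm]
    module
  have k3 : brk B P + P * (B + (2⁻¹ : ℂ) • Q) - (B + (2⁻¹ : ℂ) • Q) * P =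
      (2⁻¹ : ℂ) • (P * Q - Q * P) := by
    unfold brk
    simp only [mul_add, add_mul, smul_mul_assoc, mul_smul_comm]
    module
  rw [k1, k2, k3]
  simp only [mul_smul_comm, smul_mul_assoc, smul_smul, ← sub_smul, ← add_smul]
  convert zero_smul ℂ _ using 2
  field_simp
  ring
end
end

section
/- Let a_r, a_t, φ, ψ : (0,∞)×ℝ → M_n(ℂ) be smooth anti-Hermitian-valued maps. Define fields on (ℝ²∖{0})×ℝ in polar coordinates x = r cosθ, y = r sinθ by A_x = cosθ·a_r(r,t) − sinθ·ψ(r,t), A_y = sinθ·a_r(r,t) + cosθ·ψ(r,t), A_t = a_t(r,t), Φ = φ(r,t) (i.e. a_r is the radial component and ψ the angular component per unit length of the spatial connection). Then (A,Φ) solves the space-time monopole equation on (ℝ²∖{0})×ℝ if and only if on (0,∞)×ℝ: (i) −∂_ta_r + ∂_ra_t + [a_t,a_r] = [φ,ψ]; (ii) ∂_tψ − [a_t,ψ] = ∂_rφ − [a_r,φ]; (iii) ∂_tφ − [a_t,φ] = ∂_rψ − [a_r,ψ] + ψ/r. -/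
open Matrix Complex
open scoped Matrix ComplexConjugate

attribute [local instance] Matrix.normedAddCommGroup Matrix.normedSpace

noncomputable section

/-- Partial derivative in the first (radial) variable. -/
def pdr {n : ℕ} (f : ℝ × ℝ → Mat n) (q : ℝ × ℝ) : Mat n :=
  deriv (fun s => f (s, q.2)) q.1

/-- Partial derivative in the second (time) variable. -/
def pdsnd {n : ℕ} (f : ℝ × ℝ → Mat n) (q : ℝ × ℝ) : Mat n :=
  deriv (fun s => f (q.1, s)) q.2

/-- The radius `r = √(x² + y²)`. -/
def rad (p : P3) : ℝ := Real.sqrt (p.1 ^ 2 + p.2.1 ^ 2)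

/-- `A_x = cosθ·a_r − sinθ·ψ` in polar coordinates. -/
def polAx {n : ℕ} (ar ps : ℝ × ℝ → Mat n) (p : P3) : Mat n :=
  ((p.1 / rad p : ℝ) : ℂ) • ar (rad p, p.2.2) - ((p.2.1 / rad p : ℝ) : ℂ) • ps (rad p, p.2.2)

/-- `A_y = sinθ·a_r + cosθ·ψ` in polar coordinates. -/
def polAy {n : ℕ} (ar ps : ℝ × ℝ → Mat n) (p : P3) : Mat n :=
  ((p.2.1 / rad p : ℝ) : ℂ) • ar (rad p, p.2.2) + ((p.1 / rad p : ℝ) : ℂ) • ps (rad p, p.2.2)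

/-- A rotationally invariant field, e.g. `A_t = a_t(r,t)` or `Φ = φ(r,t)`. -/
def polRad {n : ℕ} (f : ℝ × ℝ → Mat n) (p : P3) : Mat n := f (rad p, p.2.2)

theorem aux_alg {n : ℕ} (c s k : ℂ) (h : c ^ 2 + s ^ 2 = 1)
    (a b f g ar' br' fr' gr' at_ ft gt : Mat n) :
    ((-((-(c * s * k)) • a + s • c • ar' + ((s ^ 2 * k) • g + c • c • gr'))
        + ((-(c * s * k)) • a + c • s • ar' - ((c ^ 2 * k) • g + s • s • gr'))
        + brk (c • a - s • g) (s • a + c • g) = -(ft - brk b f)) ∧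
      (-(c • br') + (c • at_ - s • gt) + brk (c • a - s • g) b
        = -(s • fr' - brk (s • a + c • g) f)) ∧
      (-(s • br') + (s • at_ + c • gt) + brk (s • a + c • g) b
        = c • fr' - brk (c • a - s • g) f)) ↔
    ((-at_ + br' + brk b a = brk f g) ∧ (gt - brk b g = fr' - brk a f) ∧
      (ft - brk b f = gr' - brk a g + k • g)) := by
  have e1 : brk (c • a - s • g) (s • a + c • g) = brk a g := by
    have : brk (c • a - s • g) (s • a + c • g) = (c ^ 2 + s ^ 2) • brk a g := by
      simp only [brk, sub_mul, mul_sub, add_mul, mul_add, smul_mul_assoc, mul_smul_comm]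
      module
    rw [this, h, one_smul]
  have e2 : ∀ z, brk (c • a - s • g) z = c • brk a z - s • brk g z := by
    intro z
    simp only [brk, sub_mul, mul_sub, smul_mul_assoc, mul_smul_comm]
    module
  have e3 : ∀ z, brk (s • a + c • g) z = s • brk a z + c • brk g z := by
    intro z
    simp only [brk, add_mul, mul_add, smul_mul_assoc, mul_smul_comm]
    module
  have e4 : brk a b = - brk b a := by simp [brk]
  have e5 : brk g b = - brk b g := by simp [brk]
  have e6 : brk g f = - brk f g := by simp [brk]
  rw [e1, e2, e2, e3, e3, e4, e5, e6]
  generalize brk a g = u1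
  generalize brk b a = u2
  generalize brk b g = u3
  generalize brk f g = u4
  generalize brk a f = u5
  generalize brk b f = u6
  constructor
  · rintro ⟨h1, h2, h3⟩
    refine ⟨?_, ?_, ?_⟩
    · linear_combination (norm := module) (-c) • h2 - s • h3 - h • (-at_ + br' + u2 - u4)
    · linear_combination (norm := module) (-s) • h2 + c • h3 - h • (gt - u3 - fr' + u5)
    · linear_combination (norm := module) h1 + h • (k • g + gr')
  · rintro ⟨h1, h2, h3⟩
    refine ⟨?_, ?_, ?_⟩
    · linear_combination (norm := module) h3 - h • (k • g + gr')
    · linear_combination (norm := module) (-c) • h1 - s • h2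
    · linear_combination (norm := module) (-s) • h1 + c • h2

theorem aux_r {n : ℕ} {f : ℝ × ℝ → Mat n} (hf : ContDiffOn ℝ (⊤ : ℕ∞) f {q : ℝ × ℝ | 0 < q.1})
    {r t : ℝ} (hr : 0 < r) :
    HasDerivAt (fun s => f (s, t)) (pdr f (r, t)) r := by
  have ho : IsOpen {q : ℝ × ℝ | 0 < q.1} := isOpen_lt continuous_const continuous_fst
  have hd : DifferentiableAt ℝ f (r, t) :=
    (hf.contDiffAt (ho.mem_nhds hr)).differentiableAt (by simp)
  have : DifferentiableAt ℝ (fun s => f (s, t)) r :=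
    DifferentiableAt.comp (f := fun s : ℝ => (s, t)) r hd (by fun_prop)
  exact this.hasDerivAt

theorem aux_t {n : ℕ} {f : ℝ × ℝ → Mat n} (hf : ContDiffOn ℝ (⊤ : ℕ∞) f {q : ℝ × ℝ | 0 < q.1})
    {r t : ℝ} (hr : 0 < r) :
    HasDerivAt (fun s => f (r, s)) (pdsnd f (r, t)) t := by
  have ho : IsOpen {q : ℝ × ℝ | 0 < q.1} := isOpen_lt continuous_const continuous_fst
  have hd : DifferentiableAt ℝ f (r, t) :=
    (hf.contDiffAt (ho.mem_nhds hr)).differentiableAt (by simp)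
  have : DifferentiableAt ℝ (fun s => f (r, s)) t :=
    DifferentiableAt.comp (f := fun s : ℝ => (r, s)) t hd (by fun_prop)
  exact this.hasDerivAt

theorem aux_radx {x y t : ℝ} (hr : 0 < rad (x, y, t)) :
    HasDerivAt (fun s => rad (s, y, t)) (x / rad (x, y, t)) x := by
  have h0 : x ^ 2 + y ^ 2 ≠ 0 := by
    intro h; simp [rad, h] at hr
  have := (((hasDerivAt_id x).pow 2).add_const (y ^ 2)).sqrt h0
  simp only [rad]
  refine HasDerivAt.congr_deriv this ?_
  simp only [rad] at hr
  have h1 := hr.ne'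
  simp only [id, Nat.cast_ofNat, Pi.pow_apply]
  field_simp
  try simp

theorem aux_rady {x y t : ℝ} (hr : 0 < rad (x, y, t)) :
    HasDerivAt (fun s => rad (x, s, t)) (y / rad (x, y, t)) y := by
  have h0 : x ^ 2 + y ^ 2 ≠ 0 := by
    intro h; simp [rad, h] at hr
  have := (((hasDerivAt_id y).pow 2).const_add (x ^ 2)).sqrt h0
  simp only [rad]
  refine HasDerivAt.congr_deriv this ?_
  simp only [rad] at hr
  have h1 := hr.ne'
  simp only [id, Nat.cast_ofNat, Pi.pow_apply]
  field_simp
  try simp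

theorem aux_smul {n : ℕ} {u : ℝ → ℝ} {u' x : ℝ} {f : ℝ → Mat n} {f' : Mat n}
    (hu : HasDerivAt u u' x) (hf : HasDerivAt f f' x) :
    HasDerivAt (fun s => ((u s : ℝ) : ℂ) • f s) ((u' : ℂ) • f x + (u x : ℂ) • f') x := by
  have := hu.smul hf
  simp only [Complex.coe_smul]
  rw [add_comm]
  exact this

theorem aux_comp {n : ℕ} {u : ℝ → ℝ} {u' x t r : ℝ} {f : ℝ × ℝ → Mat n} (hr : u x = r)
    (hu : HasDerivAt u u' x) (hf : HasDerivAt (fun s => f (s, t)) (pdr f (r, t)) r) :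
    HasDerivAt (fun s => f (u s, t)) ((u' : ℂ) • pdr f (r, t)) x := by
  subst hr
  have := HasDerivAt.scomp x hf hu
  simp only [Complex.coe_smul]
  exact this

theorem aux_main {n : ℕ} (ar at' ph ps : ℝ × ℝ → Mat n)
    (hars : ContDiffOn ℝ (⊤ : ℕ∞) ar {q : ℝ × ℝ | 0 < q.1})
    (hats : ContDiffOn ℝ (⊤ : ℕ∞) at' {q : ℝ × ℝ | 0 < q.1})
    (hphs : ContDiffOn ℝ (⊤ : ℕ∞) ph {q : ℝ × ℝ | 0 < q.1})
    (hpss : ContDiffOn ℝ (⊤ : ℕ∞) ps {q : ℝ × ℝ | 0 < q.1})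
    (x y t r : ℝ) (hr : 0 < r) (hrad : rad (x, y, t) = r) :
    MonopoleEqAt (polAx ar ps) (polAy ar ps) (polRad at') (polRad ph) (x, y, t) ↔
        ((-(pdsnd ar (r, t)) + pdr at' (r, t) + brk (at' (r, t)) (ar (r, t)) =
            brk (ph (r, t)) (ps (r, t))) ∧
        (pdsnd ps (r, t) - brk (at' (r, t)) (ps (r, t)) =
            pdr ph (r, t) - brk (ar (r, t)) (ph (r, t))) ∧
        (pdsnd ph (r, t) - brk (at' (r, t)) (ph (r, t)) =
            pdr ps (r, t) - brk (ar (r, t)) (ps (r, t)) + ((r⁻¹ : ℝ) : ℂ) • ps (r, t))) := by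
  have hr' : r ≠ 0 := hr.ne'
  have hsq : x ^ 2 + y ^ 2 = r ^ 2 := by
    rw [← hrad, rad]; exact (Real.sq_sqrt (by positivity)).symm
  have hrt : ∀ s, rad (x, y, s) = r := fun s => hrad
  have hR : (x / r) ^ 2 + (y / r) ^ 2 = 1 := by field_simp; exact hsq
  have hC : ((x / r : ℝ) : ℂ) ^ 2 + ((y / r : ℝ) : ℂ) ^ 2 = 1 := by exact_mod_cast hR
  have rx : HasDerivAt (fun s => rad (s, y, t)) (x / r) x := by
    have := aux_radx (hrad.symm ▸ hr); rwa [hrad] at this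
  have ry : HasDerivAt (fun s => rad (x, s, t)) (y / r) y := by
    have := aux_rady (hrad.symm ▸ hr); rwa [hrad] at this
  have n0 : rad (x, y, t) ≠ 0 := by rw [hrad]; exact hr'
  have xx : HasDerivAt (fun s => s / rad (s, y, t)) ((y / r) ^ 2 * r⁻¹) x := by
    refine HasDerivAt.congr_deriv ((hasDerivAt_id x).div rx n0) ?_
    rw [hrad]; simp only [id]; field_simp; linarith
  have xy : HasDerivAt (fun s => s / rad (x, s, t)) ((x / r) ^ 2 * r⁻¹) y := by
    refine HasDerivAt.congr_deriv ((hasDerivAt_id y).div ry n0) ?_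
    rw [hrad]; simp only [id]; field_simp; linarith
  have yx : HasDerivAt (fun s => y / rad (s, y, t)) (-(x / r * (y / r) * r⁻¹)) x := by
    refine HasDerivAt.congr_deriv ((hasDerivAt_const x y).div rx n0) ?_
    rw [hrad]; field_simp; ring
  have yy : HasDerivAt (fun s => x / rad (x, s, t)) (-(x / r * (y / r) * r⁻¹)) y := by
    refine HasDerivAt.congr_deriv ((hasDerivAt_const y x).div ry n0) ?_
    rw [hrad]; field_simp; ring
  have arx := aux_comp (u := fun s => rad (s, y, t)) hrad rx (aux_r (t := t) hars hr)
  have psx := aux_comp (u := fun s => rad (s, y, t)) hrad rx (aux_r (t := t) hpss hr)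
  have phx := aux_comp (u := fun s => rad (s, y, t)) hrad rx (aux_r (t := t) hphs hr)
  have atx := aux_comp (u := fun s => rad (s, y, t)) hrad rx (aux_r (t := t) hats hr)
  have ary := aux_comp (u := fun s => rad (x, s, t)) hrad ry (aux_r (t := t) hars hr)
  have psy := aux_comp (u := fun s => rad (x, s, t)) hrad ry (aux_r (t := t) hpss hr)
  have phy := aux_comp (u := fun s => rad (x, s, t)) hrad ry (aux_r (t := t) hphs hr)
  have aty := aux_comp (u := fun s => rad (x, s, t)) hrad ry (aux_r (t := t) hats hr)
  have d1 : pdx (polAy ar ps) (x, y, t) = _ := ((aux_smul yx arx).add (aux_smul xx psx)).deriv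
  have d2 : pdy (polAx ar ps) (x, y, t) = _ := ((aux_smul yy ary).sub (aux_smul xy psy)).deriv
  have d3 : pdx (polRad at') (x, y, t) = _ := atx.deriv
  have d4 : pdy (polRad at') (x, y, t) = _ := aty.deriv
  have d5 : pdx (polRad ph) (x, y, t) = _ := phx.deriv
  have d6 : pdy (polRad ph) (x, y, t) = _ := phy.deriv
  have d7 : pdt (polRad ph) (x, y, t) = pdsnd ph (r, t) := by
    simp only [pdt, polRad, hrt]; rfl
  have art := aux_t (t := t) hars hr
  have pst := aux_t (t := t) hpss hr
  have d8 : pdt (polAx ar ps) (x, y, t) =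
      ((x / r : ℝ) : ℂ) • pdsnd ar (r, t) - ((y / r : ℝ) : ℂ) • pdsnd ps (r, t) := by
    simp only [pdt, polAx, hrt]
    have := ((aux_smul (hasDerivAt_const t (x / r)) art).sub
      (aux_smul (hasDerivAt_const t (y / r)) pst)).deriv
    simp only [Complex.ofReal_zero, zero_smul, zero_add] at this
    exact this
  have d9 : pdt (polAy ar ps) (x, y, t) =
      ((y / r : ℝ) : ℂ) • pdsnd ar (r, t) + ((x / r : ℝ) : ℂ) • pdsnd ps (r, t) := by
    simp only [pdt, polAy, hrt]
    have := ((aux_smul (hasDerivAt_const t (y / r)) art).add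
      (aux_smul (hasDerivAt_const t (x / r)) pst)).deriv
    simp only [Complex.ofReal_zero, zero_smul, zero_add] at this
    exact this
  rw [← aux_alg _ _ ((r⁻¹ : ℝ) : ℂ) hC (ar' := pdr ar (r, t)), MonopoleEqAt, d1, d2, d3, d4, d5, d6, d7, d8, d9]
  simp only [polAx, polAy, polRad, hrad, Complex.ofReal_neg, Complex.ofReal_mul,
    Complex.ofReal_pow]

/-- The space-time monopole equation for a rotationally symmetric field
on `(ℝ²∖{0}) × ℝ` is equivalent to the reduced system (i)–(iii) on `(0,∞) × ℝ`. -/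
theorem radial_monopole_reduction {n : ℕ} (ar at' ph ps : ℝ × ℝ → Mat n)
    (hars : ContDiffOn ℝ (⊤ : ℕ∞) ar {q : ℝ × ℝ | 0 < q.1})
    (hats : ContDiffOn ℝ (⊤ : ℕ∞) at' {q : ℝ × ℝ | 0 < q.1})
    (hphs : ContDiffOn ℝ (⊤ : ℕ∞) ph {q : ℝ × ℝ | 0 < q.1})
    (hpss : ContDiffOn ℝ (⊤ : ℕ∞) ps {q : ℝ × ℝ | 0 < q.1})
    (hara : ∀ q : ℝ × ℝ, 0 < q.1 → (ar q)ᴴ = -(ar q))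
    (hata : ∀ q : ℝ × ℝ, 0 < q.1 → (at' q)ᴴ = -(at' q))
    (hpha : ∀ q : ℝ × ℝ, 0 < q.1 → (ph q)ᴴ = -(ph q))
    (hpsa : ∀ q : ℝ × ℝ, 0 < q.1 → (ps q)ᴴ = -(ps q)) :
    (∀ p : P3, ¬(p.1 = 0 ∧ p.2.1 = 0) →
        MonopoleEqAt (polAx ar ps) (polAy ar ps) (polRad at') (polRad ph) p) ↔
      (∀ r t : ℝ, 0 < r →
        (-(pdsnd ar (r, t)) + pdr at' (r, t) + brk (at' (r, t)) (ar (r, t)) =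
            brk (ph (r, t)) (ps (r, t))) ∧
        (pdsnd ps (r, t) - brk (at' (r, t)) (ps (r, t)) =
            pdr ph (r, t) - brk (ar (r, t)) (ph (r, t))) ∧
        (pdsnd ph (r, t) - brk (at' (r, t)) (ph (r, t)) =
            pdr ps (r, t) - brk (ar (r, t)) (ps (r, t)) + ((r⁻¹ : ℝ) : ℂ) • ps (r, t))) := by
  constructor
  · intro h r t hr
    have hrad : rad (r, 0, t) = r := by simp [rad, Real.sqrt_sq hr.le]
    exact (aux_main ar at' ph ps hars hats hphs hpss r 0 t r hr hrad).1
      (h (r, 0, t) (fun h => hr.ne' h.1))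
  · rintro h ⟨x, y, t⟩ hp
    have hr : 0 < rad (x, y, t) := by
      apply Real.sqrt_pos.2
      by_contra hc
      apply hp
      simp only at hc ⊢
      constructor <;> nlinarith [sq_nonneg x, sq_nonneg y]
    exact (aux_main ar at' ph ps hars hats hphs hpss x y t _ hr rfl).2 (h _ t hr)
end
end

section
/- Fix θ ∈ ℝ and let q : ℝ³ → U(n) be a smooth unitary-valued map (coordinates (x,y,t)). Write q_v = cosθ·∂_xq + sinθ·∂_yq. Then q satisfies the Hamiltonian evolution equation ∂_t(q⁻¹∂_tq) + [q⁻¹q_v, q⁻¹∂_tq] = ∂_x(q⁻¹∂_xq) + ∂_y(q⁻¹∂_yq) if and only if g := q⁻¹ satisfies the Ward equation with parameter −e^{iθ}: −∂_t((∂_tg)g⁻¹) + ∂_x((∂_xg)g⁻¹) + ∂_y((∂_yg)g⁻¹) + [(∂_tg)g⁻¹, cos(θ+π)·(∂_xg)g⁻¹ + sin(θ+π)·(∂_yg)g⁻¹] = 0. -/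
open Matrix Complex
open scoped Matrix ComplexConjugate

attribute [local instance] Matrix.normedAddCommGroup Matrix.normedSpace

noncomputable section

/-- The left-hand side of the Ward equation with parameter `e^{iθ}`, evaluated at `p`. -/
def WardOpAt {n : ℕ} (θ : ℝ) (g : P3 → Mat n) (p : P3) : Mat n :=
  -(pdt (fun q => pdt g q * (g q)⁻¹) p) + pdx (fun q => pdx g q * (g q)⁻¹) p +
    pdy (fun q => pdy g q * (g q)⁻¹) p +
    brk (pdt g p * (g p)⁻¹)
      ((Real.cos θ : ℂ) • (pdx g p * (g p)⁻¹) + (Real.sin θ : ℂ) • (pdy g p * (g p)⁻¹))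

theorem curve_aux {n : ℕ} (c : ℝ → Mat n) (s : ℝ) (hc : DifferentiableAt ℝ c s)
    (hu : ∀ s, c s ∈ Matrix.unitaryGroup (Fin n) ℂ) :
    deriv (fun s => (c s)⁻¹) s * ((c s)⁻¹)⁻¹ = -((c s)⁻¹ * deriv c s) := by
  have hinv : ∀ s, (c s)⁻¹ = (c s)ᴴ := fun s =>
    Matrix.inv_eq_left_inv (Matrix.mem_unitaryGroup_iff'.1 (hu s))
  have hinv2 : ((c s)⁻¹)⁻¹ = c s := by
    rw [hinv]
    exact Matrix.inv_eq_left_inv (Matrix.mem_unitaryGroup_iff.1 (hu s))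
  have h1 : ∀ i j, HasDerivAt (fun s => c s i j) (deriv c s i j) s := fun i j =>
    hasDerivAt_pi.1 (hasDerivAt_pi.1 hc.hasDerivAt i) j
  have h2 : ∀ i j, HasDerivAt (fun s => (c s)ᴴ i j) ((deriv c s)ᴴ i j) s := fun i j =>
    (h1 j i).star
  have h3 : HasDerivAt (fun s => (c s)ᴴ) ((deriv c s)ᴴ) s :=
    hasDerivAt_pi.2 fun i => hasDerivAt_pi.2 fun j => h2 i j
  have h4 : deriv (fun s => (c s)⁻¹) s = (deriv c s)ᴴ := by
    simp only [hinv]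
    exact h3.deriv
  rw [hinv2, h4, hinv, eq_neg_iff_add_eq_zero]
  ext i j
  have h5 : HasDerivAt (fun s => ∑ k, (c s)ᴴ i k * c s k j)
      (∑ k, ((deriv c s)ᴴ i k * c s k j + (c s)ᴴ i k * deriv c s k j)) s :=
    HasDerivAt.fun_sum fun k _ => (h2 i k).mul (h1 k j)
  have h6 : (fun s => ∑ k, (c s)ᴴ i k * c s k j) = fun _ => (1 : Mat n) i j := by
    funext s
    rw [← Matrix.mul_apply]
    exact congrFun (congrFun (Matrix.mem_unitaryGroup_iff'.1 (hu s)) i) j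
  rw [h6] at h5
  have h7 := h5.unique (hasDerivAt_const s _)
  rw [Finset.sum_add_distrib] at h7
  simpa [Matrix.add_apply, Matrix.mul_apply] using h7

/-- A smooth unitary-valued map `q` satisfies the Hamiltonian evolution
equation `∂_t(q⁻¹∂_tq) + [q⁻¹q_v, q⁻¹∂_tq] = ∂_x(q⁻¹∂_xq) + ∂_y(q⁻¹∂_yq)` iff `g = q⁻¹`
satisfies the Ward equation with parameter `−e^{iθ} = e^{i(θ+π)}`. -/
theorem hamiltonian_iff_ward {n : ℕ} (θ : ℝ) (q : P3 → Mat n)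
    (hqs : ContDiff ℝ (⊤ : ℕ∞) q)
    (hqu : ∀ p : P3, q p ∈ Matrix.unitaryGroup (Fin n) ℂ) :
    (∀ p : P3,
        pdt (fun r => (q r)⁻¹ * pdt q r) p +
          brk ((q p)⁻¹ * ((Real.cos θ : ℂ) • pdx q p + (Real.sin θ : ℂ) • pdy q p))
            ((q p)⁻¹ * pdt q p) =
        pdx (fun r => (q r)⁻¹ * pdx q r) p + pdy (fun r => (q r)⁻¹ * pdy q r) p) ↔
      (∀ p : P3, WardOpAt (θ + Real.pi) (fun r => (q r)⁻¹) p = 0) := by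
  have hd : Differentiable ℝ q := hqs.differentiable (by simp)
  have ht : ∀ r, pdt (fun r => (q r)⁻¹) r * ((q r)⁻¹)⁻¹ = -((q r)⁻¹ * pdt q r) := fun r =>
    curve_aux (fun s => q (r.1, r.2.1, s)) r.2.2
      (DifferentiableAt.comp r.2.2 (hd _) (by fun_prop)) (fun _ => hqu _)
  have hx : ∀ r, pdx (fun r => (q r)⁻¹) r * ((q r)⁻¹)⁻¹ = -((q r)⁻¹ * pdx q r) := fun r =>
    curve_aux (fun s => q (s, r.2.1, r.2.2)) r.1
      (DifferentiableAt.comp r.1 (hd _) (by fun_prop)) (fun _ => hqu _)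
  have hy : ∀ r, pdy (fun r => (q r)⁻¹) r * ((q r)⁻¹)⁻¹ = -((q r)⁻¹ * pdy q r) := fun r =>
    curve_aux (fun s => q (r.1, s, r.2.2)) r.2.1
      (DifferentiableAt.comp r.2.1 (hd _) (by fun_prop)) (fun _ => hqu _)
  have nt : ∀ (f : P3 → Mat n) p, pdt (fun r => -f r) p = -pdt f p := fun f p => deriv.fun_neg
  have nx : ∀ (f : P3 → Mat n) p, pdx (fun r => -f r) p = -pdx f p := fun f p => deriv.fun_neg
  have ny : ∀ (f : P3 → Mat n) p, pdy (fun r => -f r) p = -pdy f p := fun f p => deriv.fun_neg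
  refine forall_congr' fun p => ?_
  rw [← sub_eq_zero]
  refine Eq.congr ?_ rfl
  unfold WardOpAt
  simp only [ht, hx, hy, nt, nx, ny, Real.cos_add_pi, Real.sin_add_pi, brk, Complex.ofReal_neg,
    neg_smul, smul_neg, neg_neg, mul_add, add_mul, Matrix.mul_smul, Matrix.smul_mul, neg_mul,
    mul_neg]
  abel
end
end
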